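/- Let N ∈ ℕ with N ≥ 2, a > 0, R > 0 and x₀ ∈ ℝᴺ. Let w be continuous and nonnegative on the closed ball of radius R around x₀, C² on the open ball B_R(x₀), and satisfy −Δw ≤ a·w pointwise on B_R(x₀). Then w(x₀) ≤ (1/|B_R(x₀)|) ∫_{B_R(x₀)} w(x) dx + ( a R² / (2(N+2)) ) · sup_{B_R(x₀)} w, where |B_R(x₀)| denotes the Lebesgue measure of the ball. -/

import Mathlib

open MeasureTheory Metric

/-- The Laplacian: sum of the pure second partial derivatives. -/
noncomputable def lap {N : ℕ} (f : EuclideanSpace ℝ (Fin N) → ℝ)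
    (x : EuclideanSpace ℝ (Fin N)) : ℝ :=
  ∑ i : Fin N, fderiv ℝ (fun y => fderiv ℝ f y (EuclideanSpace.single i 1)) x
    (EuclideanSpace.single i 1)

noncomputable def psi {N : ℕ} (y : EuclideanSpace ℝ (Fin N)) : ℝ := (1 - (min ‖y‖ 1) ^ 2) / 2

lemma psi_lip {N : ℕ} : LipschitzWith 1 (psi (N := N)) := by
  apply LipschitzWith.of_dist_le_mul
  intro x y
  simp only [NNReal.coe_one, one_mul, Real.dist_eq, psi]
  have h1 : |min ‖x‖ 1 - min ‖y‖ 1| ≤ dist x y := by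
    refine (abs_min_sub_min_le_max _ _ _ _).trans ?_
    rw [dist_eq_norm]
    simpa using abs_norm_sub_norm_le x y
  have hp0 : 0 ≤ min ‖x‖ 1 := le_min (norm_nonneg _) zero_le_one
  have hq0 : 0 ≤ min ‖y‖ 1 := le_min (norm_nonneg _) zero_le_one
  have hp1 : min ‖x‖ 1 ≤ 1 := min_le_right _ _
  have hq1 : min ‖y‖ 1 ≤ 1 := min_le_right _ _
  refine le_trans ?_ h1
  generalize min ‖x‖ 1 = p at *
  generalize min ‖y‖ 1 = q at *
  have : (1 - p ^ 2) / 2 - (1 - q ^ 2) / 2 = -((p - q) * ((p + q) / 2)) := by ring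
  rw [this, abs_neg, abs_mul, abs_of_nonneg (a := (p + q) / 2) (by linarith)]
  exact mul_le_of_le_one_right (abs_nonneg _) (by linarith)

lemma psi_nonneg {N : ℕ} (y : EuclideanSpace ℝ (Fin N)) : 0 ≤ psi y := by
  have hp0 : 0 ≤ min ‖y‖ 1 := le_min (norm_nonneg _) zero_le_one
  have hp1 : min ‖y‖ 1 ≤ 1 := min_le_right _ _
  unfold psi
  nlinarith

lemma psi_zero {N : ℕ} {y : EuclideanSpace ℝ (Fin N)} (hy : 1 ≤ ‖y‖) : psi y = 0 := by
  simp [psi, min_eq_right hy]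

lemma psi_supp {N : ℕ} : HasCompactSupport (psi (N := N)) := by
  apply HasCompactSupport.intro (isCompact_closedBall (0 : EuclideanSpace ℝ (Fin N)) 1)
  intro x hx
  apply psi_zero
  simp at hx
  exact hx.le

lemma psi_lineDeriv_in {N : ℕ} {y : EuclideanSpace ℝ (Fin N)} (hy : ‖y‖ < 1) (i : Fin N) :
    lineDeriv ℝ psi y (EuclideanSpace.single i 1) = - y i := by
  have h0 : (psi (N := N)) =ᶠ[nhds y] fun z => (1 - ‖z‖ ^ 2) / 2 := by
    have : ∀ᶠ z in nhds y, ‖z‖ < 1 := continuous_norm.continuousAt.eventually_lt_const hy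
    filter_upwards [this] with z hz
    simp [psi, min_eq_left hz.le]
  have h1 : HasFDerivAt (fun z : EuclideanSpace ℝ (Fin N) => (1 - ‖z‖ ^ 2) / 2)
      ((2 : ℝ)⁻¹ • (-(2 • innerSL ℝ y)) : EuclideanSpace ℝ (Fin N) →L[ℝ] ℝ) y := by
    have := ((hasStrictFDerivAt_norm_sq y).hasFDerivAt.const_sub 1).const_smul (2 : ℝ)⁻¹
    refine this.congr_of_eventuallyEq (Filter.Eventually.of_forall fun z => ?_)
    simp; ring
  have h2 := (h1.congr_of_eventuallyEq h0).hasLineDerivAt (EuclideanSpace.single i 1)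
  rw [h2.lineDeriv]
  simp [EuclideanSpace.inner_single_right]

lemma psi_lineDeriv_out {N : ℕ} {y : EuclideanSpace ℝ (Fin N)} (hy : 1 < ‖y‖) (i : Fin N) :
    lineDeriv ℝ psi y (EuclideanSpace.single i 1) = 0 := by
  have h0 : (psi (N := N)) =ᶠ[nhds y] fun z => 0 := by
    have : ∀ᶠ z in nhds y, 1 < ‖z‖ := continuous_norm.continuousAt.eventually_const_lt hy
    filter_upwards [this] with z hz
    exact psi_zero hz.le
  have h2 := ((hasFDerivAt_const (𝕜 := ℝ) (0 : ℝ) y).congr_of_eventuallyEq h0).hasLineDerivAt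
    (EuclideanSpace.single i 1)
  rw [h2.lineDeriv]
  simp

lemma ibp {N : ℕ} (hN : 2 ≤ N) (g : EuclideanSpace ℝ (Fin N) → ℝ) (hg : ContDiff ℝ 1 g)
    (hgc : HasCompactSupport g) (i : Fin N) :
    ∫ y in ball (0 : EuclideanSpace ℝ (Fin N)) 1, y i * g y
      = ∫ y, psi y * fderiv ℝ g y (EuclideanSpace.single i 1) := by
  have : Nonempty (Fin N) := ⟨i⟩
  obtain ⟨C, hC⟩ := ContDiff.lipschitzWith_of_hasCompactSupport hgc hg one_ne_zero
  have key := LipschitzWith.integral_lineDeriv_mul_eq (μ := volume) psi_lip hC hgc (EuclideanSpace.single i 1)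
  have e1 : ∫ x, lineDeriv ℝ psi x (EuclideanSpace.single i 1) * g x
      = - ∫ y in ball (0 : EuclideanSpace ℝ (Fin N)) 1, y i * g y := by
    rw [← integral_indicator measurableSet_ball, ← integral_neg]
    apply integral_congr_ae
    have hs : volume (sphere (0 : EuclideanSpace ℝ (Fin N)) 1) = 0 :=
      Measure.addHaar_sphere_of_ne_zero _ _ one_ne_zero
    filter_upwards [measure_eq_zero_iff_ae_notMem.1 hs] with y hy
    rcases lt_or_ge ‖y‖ 1 with h | h
    · rw [psi_lineDeriv_in h, Set.indicator_of_mem (by simpa using h)]; ring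
    · have h' : 1 < ‖y‖ := lt_of_le_of_ne h (by simpa [eq_comm] using hy)
      rw [psi_lineDeriv_out h', Set.indicator_of_notMem (by simpa using h)]; simp
  rw [e1] at key
  rw [← neg_inj, key, ← integral_neg]
  congr 1
  ext y
  rw [((hg.differentiable one_ne_zero) y).lineDeriv_eq_fderiv, map_neg]
  ring

lemma psi_int {N : ℕ} (hN : 2 ≤ N) :
    ∫ y, psi (N := N) y
      = volume.real (ball (0 : EuclideanSpace ℝ (Fin N)) 1) / ((N : ℝ) + 2) := by
  have : Nonempty (Fin N) := ⟨⟨0, by omega⟩⟩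
  have := integral_fun_norm_addHaar (volume : Measure (EuclideanSpace ℝ (Fin N)))
    (fun t : ℝ => (1 - (min t 1) ^ 2) / 2)
  simp only [finrank_euclideanSpace, Fintype.card_fin, smul_eq_mul, nsmul_eq_mul] at this
  unfold psi
  rw [this]
  have h1 : ∫ y in Set.Ioi (0 : ℝ), y ^ (N - 1) * ((1 - (min y 1) ^ 2) / 2)
      = ∫ y in Set.Ioc (0 : ℝ) 1, y ^ (N - 1) * ((1 - (min y 1) ^ 2) / 2) := by
    apply setIntegral_eq_of_subset_of_forall_diff_eq_zero measurableSet_Ioi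
    · exact Set.Ioc_subset_Ioi_self
    · intro x hx
      simp only [Set.mem_diff, Set.mem_Ioi, Set.mem_Ioc, not_and, not_le] at hx
      rw [min_eq_right (hx.2 hx.1).le]; simp
  have h2 : ∫ y in Set.Ioc (0 : ℝ) 1, y ^ (N - 1) * ((1 - (min y 1) ^ 2) / 2)
      = ∫ y in (0 : ℝ)..1, (y ^ (N - 1) / 2 - y ^ (N + 1) / 2) := by
    rw [intervalIntegral.integral_of_le zero_le_one]
    apply setIntegral_congr_fun measurableSet_Ioc
    intro y hy
    obtain ⟨m, rfl⟩ : ∃ m, N = m + 1 := ⟨N - 1, by omega⟩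
    simp only [min_eq_left hy.2, Nat.add_sub_cancel]
    ring
  rw [h1, h2, intervalIntegral.integral_sub
    (Continuous.intervalIntegrable (by fun_prop) _ _)
    (Continuous.intervalIntegrable (by fun_prop) _ _),
    intervalIntegral.integral_div, intervalIntegral.integral_div, integral_pow, integral_pow]
  have : ((N - 1 : ℕ) : ℝ) = N - 1 := by rw [Nat.cast_sub (by omega)]; simp
  have hN' : (0 : ℝ) < N := by exact_mod_cast (by omega : 0 < N)
  rw [this]
  simp
  field_simp
  ring

lemma deriv_formula {N : ℕ} (hN : 2 ≤ N) (v : EuclideanSpace ℝ (Fin N) → ℝ)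
    (hv : ContDiff ℝ 2 v) (hvc : HasCompactSupport v) (x₀ : EuclideanSpace ℝ (Fin N))
    (t : ℝ) (ht : t ≠ 0) :
    ∫ y in ball (0 : EuclideanSpace ℝ (Fin N)) 1, fderiv ℝ v (x₀ + t • y) y
      = ∫ y, psi y * (t * lap v (x₀ + t • y)) := by
  have hD : ∀ i : Fin N, ContDiff ℝ 1 (fun x => fderiv ℝ v x (EuclideanSpace.single i 1)) := by
    intro i
    exact (hv.fderiv_right (m := 1) (by norm_num)).clm_apply contDiff_const
  have hDc : ∀ i : Fin N,
      HasCompactSupport (fun x => fderiv ℝ v x (EuclideanSpace.single i 1)) := by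
    intro i
    exact hvc.fderiv_apply (𝕜 := ℝ) _
  have hg : ∀ i : Fin N, ContDiff ℝ 1
      (fun y => fderiv ℝ v (x₀ + t • y) (EuclideanSpace.single i 1)) := by
    intro i
    exact (hD i).comp (contDiff_const.add (contDiff_id.const_smul t))
  have hgc : ∀ i : Fin N, HasCompactSupport
      (fun y => fderiv ℝ v (x₀ + t • y) (EuclideanSpace.single i 1)) := by
    intro i
    exact (hDc i).comp_homeomorph ((Homeomorph.smulOfNeZero t ht).trans (Homeomorph.addLeft x₀))
  have hexp : ∀ y : EuclideanSpace ℝ (Fin N), fderiv ℝ v (x₀ + t • y) y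
      = ∑ i, y i * fderiv ℝ v (x₀ + t • y) (EuclideanSpace.single i 1) := by
    intro y
    have hy : y = ∑ i, y i • EuclideanSpace.single i (1 : ℝ) := by
      have := (EuclideanSpace.basisFun (Fin N) ℝ).sum_repr y
      simpa using this.symm
    conv_lhs => arg 2; rw [hy]
    rw [map_sum]
    simp
  have hder : ∀ (i : Fin N) (y : EuclideanSpace ℝ (Fin N)),
      fderiv ℝ (fun y => fderiv ℝ v (x₀ + t • y) (EuclideanSpace.single i 1)) y
        (EuclideanSpace.single i 1)
      = t * fderiv ℝ (fun x => fderiv ℝ v x (EuclideanSpace.single i 1)) (x₀ + t • y)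
        (EuclideanSpace.single i 1) := by
    intro i y
    have h1 := ((hD i).differentiable one_ne_zero (x₀ + t • y)).hasFDerivAt
    have h2 : HasFDerivAt (fun y : EuclideanSpace ℝ (Fin N) => x₀ + t • y)
      (t • ContinuousLinearMap.id ℝ (EuclideanSpace ℝ (Fin N))) y :=
      ((hasFDerivAt_id y).const_smul t).const_add x₀
    have h3 := h1.comp y h2
    have h4 := h3.fderiv
    simp only [Function.comp_def] at h4
    rw [h4]
    simp
  simp_rw [hexp]
  rw [integral_finsetSum]
  · simp_rw [ibp hN _ (hg _) (hgc _), hder]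
    rw [← integral_finsetSum]
    · congr 1
      ext y
      rw [lap, Finset.mul_sum, Finset.mul_sum]
    · intro i _
      apply Continuous.integrable_of_hasCompactSupport
      · have h5 : Continuous (fun x => fderiv ℝ (fun x => fderiv ℝ v x
          (EuclideanSpace.single i 1)) x (EuclideanSpace.single i 1)) :=
          ((hD i).continuous_fderiv one_ne_zero).clm_apply continuous_const
        exact psi_lip.continuous.mul (continuous_const.mul (h5.comp (by fun_prop)))
      · exact psi_supp.mul_right
  · intro i _
    have : Continuous (fun y : EuclideanSpace ℝ (Fin N) =>
      y i * fderiv ℝ v (x₀ + t • y) (EuclideanSpace.single i 1)) :=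
      Continuous.mul (by fun_prop) (hg i).continuous
    exact (this.continuousOn.integrableOn_compact (isCompact_closedBall 0 1)).mono_set
      ball_subset_closedBall

lemma main_global {N : ℕ} (hN : 2 ≤ N) (v : EuclideanSpace ℝ (Fin N) → ℝ)
    (hv : ContDiff ℝ 2 v) (hvc : HasCompactSupport v) (x₀ : EuclideanSpace ℝ (Fin N))
    (K r : ℝ) (hr : 0 < r) (hK : ∀ x ∈ ball x₀ r, -K ≤ lap v x) :
    v x₀ * volume.real (ball (0 : EuclideanSpace ℝ (Fin N)) 1)
      ≤ (∫ y in ball (0 : EuclideanSpace ℝ (Fin N)) 1, v (x₀ + r • y))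
        + K * r ^ 2 / 2 * (volume.real (ball (0 : EuclideanSpace ℝ (Fin N)) 1) / ((N : ℝ) + 2)) := by
  set V := volume.real (ball (0 : EuclideanSpace ℝ (Fin N)) 1) with hV
  obtain ⟨C, hC⟩ := (hvc.fderiv ℝ).exists_bound_of_continuous (hv.continuous_fderiv two_ne_zero)
  have hF : ∀ t : ℝ, HasDerivAt
      (fun t : ℝ => ∫ y in ball (0 : EuclideanSpace ℝ (Fin N)) 1, v (x₀ + t • y))
      (∫ y in ball (0 : EuclideanSpace ℝ (Fin N)) 1, fderiv ℝ v (x₀ + t • y) y) t := by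
    intro t
    have hvt : ∀ t : ℝ, Continuous (fun y : EuclideanSpace ℝ (Fin N) => v (x₀ + t • y)) :=
      fun t => hv.continuous.comp (by fun_prop)
    refine (hasDerivAt_integral_of_dominated_loc_of_deriv_le (s := Set.univ) (bound := fun _ => C)
      (F' := fun t y => fderiv ℝ v (x₀ + t • y) y)
      Filter.univ_mem ?_ ?_ ?_ ?_ ?_ ?_).2
    · exact Filter.Eventually.of_forall fun t => (hvt t).aestronglyMeasurable
    · exact ((hvt t).continuousOn.integrableOn_compact (isCompact_closedBall 0 1)).mono_set
        ball_subset_closedBall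
    · have : Continuous fun y : EuclideanSpace ℝ (Fin N) => fderiv ℝ v (x₀ + t • y) y :=
        ((hv.continuous_fderiv two_ne_zero).comp
          (by fun_prop : Continuous fun y : EuclideanSpace ℝ (Fin N) => x₀ + t • y)).clm_apply
          continuous_id
      exact this.aestronglyMeasurable
    · filter_upwards [ae_restrict_mem measurableSet_ball] with y hy t _
      have hy1 : ‖y‖ ≤ 1 := by simpa using (ball_subset_closedBall hy)
      calc ‖fderiv ℝ v (x₀ + t • y) y‖ ≤ ‖fderiv ℝ v (x₀ + t • y)‖ * ‖y‖ :=
            ContinuousLinearMap.le_opNorm _ _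
        _ ≤ ‖fderiv ℝ v (x₀ + t • y)‖ * 1 := by gcongr
        _ ≤ C := by rw [mul_one]; exact hC _
    · exact integrableOn_const (measure_ball_lt_top).ne
    · refine Filter.Eventually.of_forall fun y t _ => ?_
      have h1 := (hv.differentiable two_ne_zero (x₀ + t • y)).hasFDerivAt
      have h2 : HasDerivAt (fun t : ℝ => x₀ + t • y) y t := by
        simpa using ((hasDerivAt_id t).smul_const y).const_add x₀
      exact h1.comp_hasDerivAt t h2
  set G : ℝ → ℝ := fun t =>
    (∫ y in ball (0 : EuclideanSpace ℝ (Fin N)) 1, v (x₀ + t • y)) + K * t ^ 2 / 2 * (V / (N + 2))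
    with hGdef
  have hG : ∀ t : ℝ, HasDerivAt G
      ((∫ y in ball (0 : EuclideanSpace ℝ (Fin N)) 1, fderiv ℝ v (x₀ + t • y) y)
        + K * t * (V / (N + 2))) t := by
    intro t
    have h := (hF t).add (((((hasDerivAt_id t).pow 2).const_mul K).div_const 2).mul_const (V / (N + 2)))
    refine h.congr_deriv ?_
    simp only [id, Nat.cast_ofNat]
    ring
  have hmono : MonotoneOn G (Set.Icc 0 r) := by
    apply monotoneOn_of_deriv_nonneg (convex_Icc 0 r)
    · exact fun t _ => (hG t).continuousAt.continuousWithinAt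
    · exact fun t _ => (hG t).differentiableAt.differentiableWithinAt
    · intro t ht
      rw [interior_Icc] at ht
      rw [(hG t).deriv, deriv_formula hN v hv hvc x₀ t ht.1.ne', hV, ← psi_int hN,
        ← integral_const_mul, ← integral_add]
      · apply integral_nonneg
        intro y
        show 0 ≤ psi y * (t * lap v (x₀ + t • y)) + K * t * psi y
        rcases lt_or_ge ‖y‖ 1 with h | h
        · have hm : x₀ + t • y ∈ ball x₀ r := by
            simp only [mem_ball, dist_self_add_left, norm_smul, Real.norm_eq_abs, abs_of_pos ht.1]
            calc t * ‖y‖ ≤ t * 1 := by gcongr; exact ht.1.le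
              _ < r := by simpa using ht.2
          have := mul_nonneg (mul_nonneg (psi_nonneg y) ht.1.le) (by linarith [hK _ hm] :
            0 ≤ lap v (x₀ + t • y) + K)
          linarith
        · simp [psi_zero h]
      · have hl : Continuous (lap v) := by
          unfold lap
          refine continuous_finsetSum _ fun i _ => ?_
          have hD : ContDiff ℝ 1 (fun x => fderiv ℝ v x (EuclideanSpace.single i 1)) :=
            (hv.fderiv_right (m := 1) (by norm_num)).clm_apply contDiff_const
          exact (hD.continuous_fderiv one_ne_zero).clm_apply continuous_const
        apply Continuous.integrable_of_hasCompactSupport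
        · exact psi_lip.continuous.mul (continuous_const.mul (hl.comp (by fun_prop)))
        · exact psi_supp.mul_right
      · exact (psi_lip.continuous.integrable_of_hasCompactSupport psi_supp).const_mul _
  have hfin := hmono (Set.left_mem_Icc.2 hr.le) (Set.right_mem_Icc.2 hr.le) hr.le
  have hG0 : G 0 = v x₀ * V := by
    simp [hGdef, hV, mul_comm]
  rw [hG0] at hfin
  exact hfin

lemma main_local {N : ℕ} (hN : 2 ≤ N) (w : EuclideanSpace ℝ (Fin N) → ℝ)
    (x₀ : EuclideanSpace ℝ (Fin N)) (K r R : ℝ) (hr : 0 < r) (hrR : r < R)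
    (hw2 : ContDiffOn ℝ 2 w (ball x₀ R)) (hK : ∀ x ∈ ball x₀ r, -K ≤ lap w x) :
    w x₀ * volume.real (ball (0 : EuclideanSpace ℝ (Fin N)) 1)
      ≤ (∫ y in ball (0 : EuclideanSpace ℝ (Fin N)) 1, w (x₀ + r • y))
        + K * r ^ 2 / 2 * (volume.real (ball (0 : EuclideanSpace ℝ (Fin N)) 1) / ((N : ℝ) + 2)) := by
  let η : ContDiffBump x₀ := ⟨r, (r + R) / 2, hr, by linarith⟩
  have hηo : η.rOut = (r + R) / 2 := rfl
  have hηi : η.rIn = r := rfl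
  have hone : ∀ x ∈ ball x₀ r, (fun x => η x * w x) =ᶠ[nhds x] w := by
    intro x hx
    filter_upwards [isOpen_ball.mem_nhds hx] with z hz
    rw [η.one_of_mem_closedBall (ball_subset_closedBall hz), one_mul]
  have hv : ContDiff ℝ 2 (fun x => η x * w x) := by
    rw [contDiff_iff_contDiffAt]
    intro x
    by_cases hx : x ∈ ball x₀ R
    · exact η.contDiffAt.mul (hw2.contDiffAt (isOpen_ball.mem_nhds hx))
    · have : (fun x => η x * w x) =ᶠ[nhds x] fun _ => 0 := by
        have hx' : x ∈ (tsupport η)ᶜ := by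
          rw [η.tsupport_eq, hηo]
          simp only [mem_ball, not_lt] at hx
          simp only [Set.mem_compl_iff, mem_closedBall, not_le]
          linarith
        filter_upwards [(isClosed_tsupport η).isOpen_compl.mem_nhds hx'] with z hz
        rw [image_eq_zero_of_notMem_tsupport hz, zero_mul]
      exact contDiffAt_const.congr_of_eventuallyEq this
  have hvc : HasCompactSupport (fun x => η x * w x) := η.hasCompactSupport.mul_right
  have hlap : ∀ x ∈ ball x₀ r, lap (fun x => η x * w x) x = lap w x := by
    intro x hx
    unfold lap
    refine Finset.sum_congr rfl fun i _ => ?_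
    have : (fun y => fderiv ℝ (fun x => η x * w x) y (EuclideanSpace.single i 1)) =ᶠ[nhds x]
        (fun y => fderiv ℝ w y (EuclideanSpace.single i 1)) := by
      filter_upwards [isOpen_ball.mem_nhds hx] with z hz
      rw [(hone z hz).fderiv_eq]
    rw [this.fderiv_eq]
  have := main_global hN _ hv hvc x₀ K r hr (fun x hx => by rw [hlap x hx]; exact hK x hx)
  have e0 : η x₀ * w x₀ = w x₀ := (hone x₀ (mem_ball_self hr)).eq_of_nhds
  have e1 : ∫ y in ball (0 : EuclideanSpace ℝ (Fin N)) 1, η (x₀ + r • y) * w (x₀ + r • y)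
      = ∫ y in ball (0 : EuclideanSpace ℝ (Fin N)) 1, w (x₀ + r • y) := by
    apply setIntegral_congr_fun measurableSet_ball
    intro y hy
    have hy1 : ‖y‖ < 1 := by simpa using hy
    have hm : x₀ + r • y ∈ ball x₀ r := by
      simp only [mem_ball, dist_self_add_left, norm_smul, Real.norm_eq_abs, abs_of_pos hr]
      nlinarith
    exact (hone _ hm).eq_of_nhds
  simp only [e0, e1] at this
  exact this

theorem stmt8 (N : ℕ) (hN : 2 ≤ N) (a R : ℝ) (ha : 0 < a) (hR : 0 < R)
    (x₀ : EuclideanSpace ℝ (Fin N)) (w : EuclideanSpace ℝ (Fin N) → ℝ)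
    (hwc : ContinuousOn w (Metric.closedBall x₀ R))
    (hw0 : ∀ x ∈ Metric.closedBall x₀ R, 0 ≤ w x)
    (hw2 : ContDiffOn ℝ 2 w (Metric.ball x₀ R))
    (hsub : ∀ x ∈ Metric.ball x₀ R, -lap w x ≤ a * w x) :
    w x₀ ≤ (volume (Metric.ball x₀ R)).toReal⁻¹ * (∫ x in Metric.ball x₀ R, w x)
      + a * R ^ 2 / (2 * ((N : ℝ) + 2)) * sSup (w '' Metric.ball x₀ R) := by
  have : Nonempty (Fin N) := ⟨⟨0, by omega⟩⟩
  set M := sSup (w '' Metric.ball x₀ R) with hM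
  have hbdd : BddAbove (w '' Metric.ball x₀ R) :=
    ((isCompact_closedBall x₀ R).image_of_continuousOn hwc).bddAbove.mono
      (Set.image_mono ball_subset_closedBall)
  have hle : ∀ x ∈ ball x₀ R, w x ≤ M := fun x hx => le_csSup hbdd ⟨x, hx, rfl⟩
  set V := volume.real (ball (0 : EuclideanSpace ℝ (Fin N)) 1) with hV
  have hVpos : 0 < V := by
    rw [hV, Measure.real]
    exact ENNReal.toReal_pos (measure_ball_pos _ _ one_pos).ne' measure_ball_lt_top.ne
  have hmem : ∀ r ∈ Set.Ioc 0 R, ∀ y ∈ ball (0 : EuclideanSpace ℝ (Fin N)) 1,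
      x₀ + r • y ∈ ball x₀ R := by
    intro r hr y hy
    have hy1 : ‖y‖ < 1 := by simpa using hy
    simp only [mem_ball, dist_self_add_left, norm_smul, Real.norm_eq_abs, abs_of_pos hr.1]
    have := hr.1
    have := hr.2
    nlinarith
  have hcont : ContinuousOn (fun r : ℝ =>
      ∫ y in ball (0 : EuclideanSpace ℝ (Fin N)) 1, w (x₀ + r • y)) (Set.Ioc 0 R) := by
    apply continuousOn_of_dominated (bound := fun _ => M)
    · intro r hr
      apply ContinuousOn.aestronglyMeasurable _ measurableSet_ball
      exact hw2.continuousOn.comp (by fun_prop) (fun y hy => hmem r hr y hy)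
    · intro r hr
      filter_upwards [ae_restrict_mem measurableSet_ball] with y hy
      have := hmem r hr y hy
      rw [Real.norm_of_nonneg (hw0 _ (ball_subset_closedBall this))]
      exact hle _ this
    · exact integrableOn_const (measure_ball_lt_top).ne
    · filter_upwards [ae_restrict_mem measurableSet_ball] with y hy
      exact hw2.continuousOn.comp (by fun_prop) (fun r hr => hmem r hr y hy)
  have hlim : w x₀ * V ≤ (∫ y in ball (0 : EuclideanSpace ℝ (Fin N)) 1, w (x₀ + R • y))
        + a * M * R ^ 2 / 2 * (V / ((N : ℝ) + 2)) := by
    have hc2 : ContinuousOn (fun r : ℝ =>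
      (∫ y in ball (0 : EuclideanSpace ℝ (Fin N)) 1, w (x₀ + r • y))
        + a * M * r ^ 2 / 2 * (V / ((N : ℝ) + 2))) (Set.Ioc 0 R) :=
      hcont.add (Continuous.continuousOn (by fun_prop))
    have ht := (hc2 R ⟨hR, le_rfl⟩).mono Set.Ioo_subset_Ioc_self
    have : (nhdsWithin R (Set.Ioo 0 R)).NeBot := by
      rw [← mem_closure_iff_nhdsWithin_neBot, closure_Ioo hR.ne]
      exact Set.right_mem_Icc.2 hR.le
    refine ge_of_tendsto ht ?_
    filter_upwards [self_mem_nhdsWithin] with r hr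
    refine main_local hN w x₀ (a * M) r R hr.1 hr.2 hw2 fun x hx => ?_
    have hx' := ball_subset_ball hr.2.le hx
    have h1 := hsub x hx'
    have h2 := mul_le_mul_of_nonneg_left (hle x hx') ha.le
    linarith
  have hvol : (volume (ball x₀ R)).toReal = R ^ N * V := by
    rw [Measure.addHaar_ball _ _ hR.le, ENNReal.toReal_mul, ENNReal.toReal_ofReal (by positivity)]
    simp [hV, Measure.real]
  have hint : ∫ y in ball (0 : EuclideanSpace ℝ (Fin N)) 1, w (x₀ + R • y)
      = (R ^ N)⁻¹ * ∫ x in ball x₀ R, w x := by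
    rw [Measure.setIntegral_comp_smul_of_pos volume (fun z => w (x₀ + z)) _ hR]
    simp only [finrank_euclideanSpace, Fintype.card_fin, smul_eq_mul]
    congr 1
    rw [smul_unitBall_of_pos hR]
    have := (measurePreserving_add_left volume x₀).setIntegral_preimage_emb
      (MeasurableEquiv.addLeft x₀).measurableEmbedding w (ball x₀ R)
    rw [← this]
    congr 2
    ext z
    simp
  rw [hint] at hlim
  rw [hvol]
  have hRN : 0 < R ^ N := by positivity
  rw [← mul_le_mul_iff_left₀ hVpos]
  refine hlim.trans (le_of_eq ?_)
  field_simp
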